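/- A permutation w ∈ S_n is smooth (i.e., avoids the patterns 3412 and 4231) if and only if ℓ(w) equals the number of transpositions T_{i,j} with T_{i,j} ≤ w in Bruhat order. -/

import Mathlib

open Equiv

/-- Number of inversions (Coxeter length) of a permutation of ℕ. -/
noncomputable def invNum (w : Perm ℕ) : ℕ :=
  Set.ncard {p : ℕ × ℕ | p.1 < p.2 ∧ w p.2 < w p.1}

/-- Strong Bruhat order on (finitary) permutations of ℕ. -/
def BruhatLE (x y : Perm ℕ) : Prop :=
  Relation.ReflTransGen
    (fun u v => (∃ a b : ℕ, a < b ∧ v = u * Equiv.swap a b) ∧ invNum u < invNum v) x y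

def BruhatLT (x y : Perm ℕ) : Prop := BruhatLE x y ∧ x ≠ y

/-- w avoids the pattern 3412. -/
def Avoids3412 (w : Perm ℕ) : Prop :=
  ¬ ∃ a b c d : ℕ, a < b ∧ b < c ∧ c < d ∧ w c < w d ∧ w d < w a ∧ w a < w b

/-- w avoids the pattern 4231. -/
def Avoids4231 (w : Perm ℕ) : Prop :=
  ¬ ∃ a b c d : ℕ, a < b ∧ b < c ∧ c < d ∧ w d < w b ∧ w b < w c ∧ w c < w a

/-!
A reflection `swap i j` with `i < j` satisfies `swap i j ≤ w` iff `j ≤ max {w 0, …, w i}` and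
`j ≤ max {w⁻¹ 0, …, w⁻¹ i}`, by the rank-matrix description of Bruhat order. Hence the number of
reflections below `w` is a sum over `i`. Deleting the largest entry `n` of `w`, at position `d`,
lowers the length by `n - d` and lowers the `i`-th summand by at least `1` if `d ≤ i` and by at
least `0` otherwise, so the defect `#{t ≤ w} - ℓ(w)` is a sum of nonnegative local defects over the
successive deletions. If `w` avoids both patterns, so do its deletions, and a positive local defect
would exhibit a pattern. Conversely, if the defect of `w` vanishes, so does that of `w⁻¹`, and by
induction the deletions of `w` and of `w⁻¹` avoid both patterns; a pattern in `w` then uses both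
the largest entry and the last position, and it forces a positive local defect of `w` or of `w⁻¹`.
-/

open Finset Function

theorem exists_mem_apply_notMem_of_card_lt {α β : Type*} {f : α → β} (hf : Injective f)
    {s : Finset α} {t : Finset β} (h : #t < #s) : ∃ a ∈ s, f a ∉ t := by
  by_contra! h'
  exact h.not_ge (card_le_card_of_injOn f h' hf.injOn)

/-- `w` fixes every `k ≥ n`, i.e. `w` lies in the symmetric group of `{0, …, n - 1}`. -/
def FixesFrom (n : ℕ) (w : Perm ℕ) : Prop := ∀ k, n ≤ k → w k = k

namespace FixesFrom

variable {m n : ℕ} {v w : Perm ℕ}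

theorem mono (hw : FixesFrom m w) (hmn : m ≤ n) : FixesFrom n w :=
  fun k hk => hw k (hmn.trans hk)

theorem inv (hw : FixesFrom n w) : FixesFrom n w⁻¹ := fun k hk => by
  rw [Perm.inv_eq_iff_eq, hw k hk]

theorem mul (hv : FixesFrom m v) (hw : FixesFrom n w) : FixesFrom (max m n) (v * w) :=
  fun k hk => by
    rw [Perm.mul_apply, hw k (by omega), hv k (by omega)]

theorem swap (a b : ℕ) : FixesFrom (max a b + 1) (swap a b) := fun _ _ =>
  swap_apply_of_ne_of_ne (by omega) (by omega)

theorem eq_one (hw : FixesFrom 0 w) : w = 1 := by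
  ext k
  exact hw k k.zero_le

theorem apply_lt (hw : FixesFrom n w) {k : ℕ} (hk : k < n) : w k < n := by
  by_contra! h
  exact (hk.trans_le h).ne' (w.injective (hw (w k) h))

end FixesFrom

section Inversions

variable {n a b : ℕ} {u w : Perm ℕ}

/-- The inversions of `w` as pairs of positions, so that `invNum w` is their number. -/
def inversions (w : Perm ℕ) : Set (ℕ × ℕ) := {p | p.1 < p.2 ∧ w p.2 < w p.1}

theorem mem_inversions : (a, b) ∈ inversions w ↔ a < b ∧ w b < w a := Iff.rfl

theorem ncard_inversions (w : Perm ℕ) : (inversions w).ncard = invNum w := rfl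

theorem FixesFrom.lt_of_mem_inversions (hw : FixesFrom n w) (h : (a, b) ∈ inversions w) :
    b < n := by
  obtain ⟨hab, hlt⟩ := mem_inversions.1 h
  by_contra! hb
  rw [hw b hb] at hlt
  rcases lt_or_ge a n with ha | ha
  · exact (hw.apply_lt ha).not_ge (hb.trans hlt.le)
  · exact (hw a ha ▸ hlt).not_gt hab

theorem FixesFrom.finite_inversions (hw : FixesFrom n w) : (inversions w).Finite := by
  refine ((Set.finite_Iio n).prod (Set.finite_Iio n)).subset ?_
  rintro ⟨a, b⟩ h
  have hb := hw.lt_of_mem_inversions h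
  exact ⟨h.1.trans hb, hb⟩

theorem invNum_one : invNum 1 = 0 := by
  have : inversions 1 = ∅ := Set.eq_empty_of_forall_notMem fun p hp => hp.1.not_gt hp.2
  rw [← ncard_inversions, this, Set.ncard_empty]

theorem invNum_inv (w : Perm ℕ) : invNum w⁻¹ = invNum w := by
  have himage : inversions w⁻¹ = (fun p : ℕ × ℕ => (w p.2, w p.1)) '' inversions w := by
    ext ⟨a, b⟩
    constructor
    · rintro ⟨hab, hlt⟩
      exact ⟨(w⁻¹ b, w⁻¹ a), ⟨hlt, by simpa using hab⟩, by simp⟩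
    · rintro ⟨⟨c, d⟩, ⟨hcd, hlt⟩, h⟩
      obtain ⟨rfl, rfl⟩ := Prod.mk.inj h
      exact ⟨hlt, by simpa using hcd⟩
  have hinj : Injective fun p : ℕ × ℕ => (w p.2, w p.1) := by
    rintro ⟨a, b⟩ ⟨c, d⟩ h
    simpa [and_comm] using h
  rw [← ncard_inversions, himage, Set.ncard_image_of_injective _ hinj, ncard_inversions]

/-- Moves a pair of positions along `s` when this keeps it increasing. With `s = swap a b` it
injects the inversions of `u` into those of `u * s` whenever `u a < u b`. -/
def moveIfLT (s : Perm ℕ) (p : ℕ × ℕ) : ℕ × ℕ := if s p.1 < s p.2 then (s p.1, s p.2) else p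

theorem moveIfLT_swap_injOn (a b : ℕ) :
    Set.InjOn (moveIfLT (swap a b)) {p : ℕ × ℕ | p.1 < p.2} := by
  have hinv : Set.LeftInvOn (moveIfLT (swap a b)) (moveIfLT (swap a b))
      {p : ℕ × ℕ | p.1 < p.2} := by
    rintro ⟨i, j⟩ (hij : i < j)
    by_cases h : swap a b i < swap a b j <;> simp [moveIfLT, h, hij]
  exact hinv.injOn

theorem moveIfLT_swap_mapsTo (hab : a < b) (hu : u a < u b) :
    Set.MapsTo (moveIfLT (swap a b)) (inversions u) (inversions (u * swap a b)) := by
  rintro ⟨i, j⟩ ⟨hij, hlt⟩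
  by_cases h : swap a b i < swap a b j
  · simpa [moveIfLT, h, mem_inversions] using hlt
  · simp only [moveIfLT, if_neg h]
    refine ⟨hij, ?_⟩
    simp only [Perm.mul_apply, swap_apply_def] at h hij hlt ⊢
    grind

theorem notMem_moveIfLT_swap_image (hab : a < b) (hu : u a < u b) :
    (a, b) ∉ moveIfLT (swap a b) '' inversions u := by
  rintro ⟨⟨i, j⟩, ⟨hij, hlt⟩, h⟩
  by_cases hs : swap a b i < swap a b j
  · simp only [moveIfLT, if_pos hs, Prod.mk.injEq, swap_apply_eq_iff, swap_apply_left,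
      swap_apply_right] at h
    grind
  · simp only [moveIfLT, if_neg hs, Prod.mk.injEq] at h
    grind

theorem invNum_lt_invNum_mul_swap (hu : FixesFrom n u) (hab : a < b) (h : u a < u b) :
    invNum u < invNum (u * swap a b) := by
  have hinj := (moveIfLT_swap_injOn a b).mono fun p (hp : p ∈ inversions u) => hp.1
  rw [← ncard_inversions, ← ncard_inversions, ← hinj.ncard_image]
  have hmem : (a, b) ∈ inversions (u * swap a b) := by simpa [mem_inversions] using ⟨hab, h⟩
  exact Set.ncard_lt_ncard
    (Set.ssubset_iff_exists.2 ⟨(moveIfLT_swap_mapsTo hab h).image_subset, _, hmem,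
      notMem_moveIfLT_swap_image hab h⟩)
    (hu.mul (.swap a b)).finite_inversions

theorem invNum_lt_invNum_mul_swap_iff (hu : FixesFrom n u) (hab : a < b) :
    invNum u < invNum (u * swap a b) ↔ u a < u b := by
  refine ⟨fun h => ?_, invNum_lt_invNum_mul_swap hu hab⟩
  by_contra! hle
  have hlt : u b < u a := hle.lt_of_ne (u.injective.ne hab.ne')
  have := invNum_lt_invNum_mul_swap (hu.mul (.swap a b)) hab (by simpa using hlt)
  rw [mul_swap_mul_self] at this
  exact this.not_gt h

end Inversions

section RankFunction

variable {n a b i j p q : ℕ} {u w : Perm ℕ}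

/-- The rank function of the permutation matrix of `w`: the number of `x < p` with `w x < q`. -/
def rankFn (w : Perm ℕ) (p q : ℕ) : ℕ := #{x ∈ range p | w x < q}

theorem rankFn_zero_left (w : Perm ℕ) (q : ℕ) : rankFn w 0 q = 0 := by simp [rankFn]

theorem rankFn_succ_left (w : Perm ℕ) (p q : ℕ) :
    rankFn w (p + 1) q = rankFn w p q + if w p < q then 1 else 0 := by
  simp only [rankFn, card_filter, sum_range_succ]

theorem rankFn_inv (w : Perm ℕ) (p q : ℕ) : rankFn w⁻¹ p q = rankFn w q p :=
  card_nbij' (w⁻¹ ·) (w ·) (fun x hx => by simp_all) (fun x hx => by simp_all)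
    (fun x _ => by simp) fun x _ => by simp

theorem rankFn_mono_right (w : Perm ℕ) (p : ℕ) : Monotone (rankFn w p) := fun _ _ h =>
  card_le_card (monotone_filter_right _ fun _ _ hx => lt_of_lt_of_le hx h)

theorem rankFn_add_le (w : Perm ℕ) (p k q : ℕ) : rankFn w (p + k) q ≤ rankFn w p q + k := by
  induction k with
  | zero => rfl
  | succ k ih =>
    rw [← Nat.add_assoc, rankFn_succ_left]
    split_ifs <;> omega

theorem rankFn_eq_add_card {r : ℕ} (hr : r ≤ q) :
    rankFn w p q = rankFn w p r + #{x ∈ range p | r ≤ w x ∧ w x < q} := by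
  rw [rankFn, rankFn, ← card_union_of_disjoint (disjoint_filter.2 fun _ _ _ => by omega),
    ← filter_or]
  exact congrArg card (filter_congr fun _ _ => by omega)

theorem rankFn_one (p q : ℕ) : rankFn 1 p q = min p q := by
  induction p with
  | zero => simp [rankFn_zero_left]
  | succ p ih =>
    rw [rankFn_succ_left, ih, Perm.one_apply]
    split_ifs <;> omega

theorem rankFn_mul_swap_add (hab : a < b) (hu : u a < u b) (p q : ℕ) :
    rankFn (u * swap a b) p q + (if a < p ∧ p ≤ b ∧ u a < q ∧ q ≤ u b then 1 else 0) =
      rankFn u p q := by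
  induction p with
  | zero => simp [rankFn_zero_left]
  | succ p ih =>
    rw [rankFn_succ_left, rankFn_succ_left, ← ih, Perm.mul_apply, swap_apply_def]
    grind

theorem BruhatLE.rankFn_le (hu : FixesFrom n u) (h : BruhatLE u w) (p q : ℕ) :
    rankFn w p q ≤ rankFn u p q := by
  suffices (∃ m, FixesFrom m w) ∧ rankFn w p q ≤ rankFn u p q from this.2
  induction h with
  | refl => exact ⟨⟨n, hu⟩, le_rfl⟩
  | tail _ hstep ih =>
    obtain ⟨⟨a, b, hab, rfl⟩, hlt⟩ := hstep
    obtain ⟨⟨m, hm⟩, hle⟩ := ih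
    have hswap := rankFn_mul_swap_add hab ((invNum_lt_invNum_mul_swap_iff hm hab).1 hlt) p q
    exact ⟨⟨_, hm.mul (.swap a b)⟩, by omega⟩

theorem exists_first_apply_ne (h : u ≠ w) : ∃ a, (∀ x < a, u x = w x) ∧ u a ≠ w a := by
  classical
  have hex : ∃ a, u a ≠ w a := by
    contrapose! h
    exact Equiv.ext h
  exact ⟨Nat.find hex, fun x hx => not_not.1 (Nat.find_min hex hx), Nat.find_spec hex⟩

theorem apply_le_apply_of_rankFn_le (hrank : ∀ p q, rankFn w p q ≤ rankFn u p q)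
    (heq : ∀ x < a, u x = w x) : u a ≤ w a := by
  have hinit : rankFn u a (w a + 1) = rankFn w a (w a + 1) :=
    congrArg card (filter_congr fun x hx => by rw [heq x (mem_range.1 hx)])
  have h := hrank (a + 1) (w a + 1)
  rw [rankFn_succ_left, rankFn_succ_left, hinit, if_pos (Nat.lt_succ_self _)] at h
  split_ifs at h <;> omega

theorem exists_first_inversion (heq : ∀ x < a, u x = w x) (hlt : u a < w a) :
    ∃ b, a < b ∧ u a ≤ w b ∧ w b < w a ∧ ∀ x, a < x → x < b → u a ≤ w x → w a ≤ w x := by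
  classical
  have hex : ∃ b, a < b ∧ u a ≤ w b ∧ w b < w a := by
    obtain ⟨b, hb⟩ := w.surjective (u a)
    refine ⟨b, ?_, hb.ge, hb ▸ hlt⟩
    rcases lt_trichotomy b a with h | rfl | h
    · exact absurd (u.injective ((heq b h).trans hb)) h.ne
    · exact absurd hb hlt.ne'
    · exact h
  obtain ⟨hab, hle, hwb⟩ := Nat.find_spec hex
  exact ⟨_, hab, hle, hwb, fun x hax hxb hx =>
    not_lt.1 fun h => Nat.find_min hex hxb ⟨hax, hx, h⟩⟩

theorem rankFn_lt_rankFn_of_first_inversion (hrank : ∀ p q, rankFn w p q ≤ rankFn u p q)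
    (heq : ∀ x < a, u x = w x) (hmin : ∀ x, a < x → x < b → u a ≤ w x → w a ≤ w x)
    (hap : a < p) (hpb : p ≤ b) (hq : u a < q) (hqa : q ≤ w a) :
    rankFn w p q < rankFn u p q := by
  have hsub : {x ∈ range p | u a ≤ w x ∧ w x < q} ⊂ {x ∈ range p | u a ≤ u x ∧ u x < q} := by
    refine ssubset_iff_of_subset (fun x hx => ?_) |>.2 ⟨a, by simp [hap, hq], by simp [hqa]⟩
    simp only [mem_filter, mem_range] at hx ⊢
    have hxa : x < a := by
      have := hmin x
      grind
    rwa [heq x hxa]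
  have hcard := card_lt_card hsub
  have hle := hrank p (u a)
  rw [rankFn_eq_add_card (w := w) hq.le, rankFn_eq_add_card (w := u) hq.le]
  omega

-- One descends from `w`: exchanging the entries of `w` at the first position `a` where `u` and `w`
-- differ and at the next position whose value lies in `[u a, w a)` keeps the rank inequalities.
theorem bruhatLE_of_rankFn_le (hw : FixesFrom n w) (hrank : ∀ p q, rankFn w p q ≤ rankFn u p q) :
    BruhatLE u w := by
  induction hk : invNum w using Nat.strong_induction_on generalizing n w with
  | _ k ih =>
    by_cases huw : u = w
    · exact huw ▸ .refl
    obtain ⟨a, heq, hne⟩ := exists_first_apply_ne huw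
    have hlt : u a < w a := (apply_le_apply_of_rankFn_le hrank heq).lt_of_ne hne
    obtain ⟨b, hab, hle, hwb, hmin⟩ := exists_first_inversion heq hlt
    set v := w * swap a b with hv
    have hvw : v * swap a b = w := mul_swap_mul_self a b w
    have hva : v a < v b := by simpa [hv] using hwb
    have hvfix : FixesFrom _ v := hw.mul (.swap a b)
    have hlen : invNum v < invNum w := hvw ▸ invNum_lt_invNum_mul_swap hvfix hab hva
    have hvrank : ∀ p q, rankFn v p q ≤ rankFn u p q := by
      intro p q
      have hswap := rankFn_mul_swap_add hab hva p q
      have hvab : v a = w b ∧ v b = w a := by simp [hv]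
      rw [hvw, hvab.1, hvab.2] at hswap
      split_ifs at hswap with hpq
      · have := rankFn_lt_rankFn_of_first_inversion hrank heq hmin hpq.1 hpq.2.1
          (hle.trans_lt hpq.2.2.1) hpq.2.2.2
        omega
      · exact hswap ▸ hrank p q
    exact .tail (ih _ (hk ▸ hlen) hvfix hvrank rfl) ⟨⟨a, b, hab, hvw.symm⟩, hlen⟩

theorem rankFn_swap_add (hij : i < j) (p q : ℕ) :
    rankFn (swap i j) p q + (if i < p ∧ p ≤ j ∧ i < q ∧ q ≤ j then 1 else 0) = min p q := by
  have h := rankFn_mul_swap_add (u := 1) hij hij p q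
  rwa [one_mul, rankFn_one] at h

theorem rankFn_le_min (w : Perm ℕ) (p q : ℕ) : rankFn w p q ≤ min p q := by
  have hp := rankFn_add_le w 0 p q
  have hq := rankFn_add_le w⁻¹ 0 q p
  rw [Nat.zero_add, rankFn_zero_left] at hp hq
  rw [rankFn_inv] at hq
  omega

theorem bruhatLE_swap_iff_rankFn (hw : FixesFrom n w) (hij : i < j) :
    BruhatLE (swap i j) w ↔ rankFn w (i + 1) j ≤ i ∧ rankFn w j (i + 1) ≤ i := by
  constructor
  · intro h
    have hle := BruhatLE.rankFn_le (.swap i j) h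
    have hrow := rankFn_swap_add hij (i + 1) j
    have hcol := rankFn_swap_add hij j (i + 1)
    rw [if_pos (by omega)] at hrow hcol
    have := hle (i + 1) j
    have := hle j (i + 1)
    omega
  · rintro ⟨hrow, hcol⟩
    refine bruhatLE_of_rankFn_le hw fun p q => ?_
    have hswap := rankFn_swap_add hij p q
    split_ifs at hswap with hpq
    · have hp := rankFn_add_le w (i + 1) (p - (i + 1)) q
      have hq := rankFn_add_le w⁻¹ (i + 1) (q - (i + 1)) p
      rw [Nat.add_sub_cancel' (by omega)] at hp hq
      rw [rankFn_inv, rankFn_inv] at hq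
      have hrow' := rankFn_mono_right w (i + 1) hpq.2.2.2
      have hcol' := rankFn_mono_right w⁻¹ (i + 1) hpq.2.1
      rw [rankFn_inv, rankFn_inv] at hcol'
      omega
    · exact (rankFn_le_min w p q).trans_eq hswap.symm

end RankFunction

section ReflBound

variable {n i j : ℕ} {w : Perm ℕ}

/-- The running maximum `max {w 0, …, w i}`. -/
def runMax (w : Perm ℕ) (i : ℕ) : ℕ := (range (i + 1)).sup w

theorem le_runMax (w : Perm ℕ) {a : ℕ} (ha : a ≤ i) : w a ≤ runMax w i :=
  le_sup (f := w) (mem_range.2 (Nat.lt_succ_of_le ha))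

theorem le_runMax_inv {p : ℕ} (hp : w p ≤ i) : p ≤ runMax w⁻¹ i := by
  simpa using le_runMax w⁻¹ hp

theorem exists_apply_eq_runMax (w : Perm ℕ) (i : ℕ) : ∃ a ≤ i, w a = runMax w i := by
  obtain ⟨a, ha, h⟩ := exists_mem_eq_sup (range (i + 1)) nonempty_range_add_one w
  exact ⟨a, Nat.le_of_lt_succ (mem_range.1 ha), h.symm⟩

theorem apply_runMax_inv_le (w : Perm ℕ) (i : ℕ) : w (runMax w⁻¹ i) ≤ i := by
  obtain ⟨a, ha, h⟩ := exists_apply_eq_runMax w⁻¹ i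
  simpa [← h] using ha

theorem FixesFrom.runMax_lt (hw : FixesFrom n w) (hi : i < n) : runMax w i < n := by
  obtain ⟨a, ha, h⟩ := exists_apply_eq_runMax w i
  exact h ▸ hw.apply_lt (ha.trans_lt hi)

theorem rankFn_le_iff_le_runMax : rankFn w (i + 1) j ≤ i ↔ j ≤ runMax w i := by
  have hfull : rankFn w (i + 1) j = i + 1 ↔ ∀ a ∈ range (i + 1), w a < j := by
    rw [← card_filter_eq_iff, card_range, rankFn]
  have hle := rankFn_le_min w (i + 1) j
  obtain ⟨a, ha, h⟩ := exists_apply_eq_runMax w i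
  constructor
  · intro hlt
    by_contra! hj
    have := hfull.2 fun x hx => (le_runMax w (Nat.le_of_lt_succ (mem_range.1 hx))).trans_lt hj
    omega
  · intro hj
    by_contra! hlt
    exact (hfull.1 (by omega) a (mem_range.2 (by omega))).not_ge (h ▸ hj)

theorem self_le_runMax (w : Perm ℕ) (i : ℕ) : i ≤ runMax w i :=
  rankFn_le_iff_le_runMax.1 ((rankFn_le_min w _ _).trans (min_le_right _ _))

/-- The largest `j` with `swap i j ≤ w` in Bruhat order, or `i` if there is no such `j > i`. -/
def reflBound (w : Perm ℕ) (i : ℕ) : ℕ := min (runMax w i) (runMax w⁻¹ i)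

theorem reflBound_inv (w : Perm ℕ) (i : ℕ) : reflBound w⁻¹ i = reflBound w i := by
  rw [reflBound, reflBound, inv_inv, min_comm]

theorem self_le_reflBound (w : Perm ℕ) (i : ℕ) : i ≤ reflBound w i :=
  le_min (self_le_runMax w i) (self_le_runMax w⁻¹ i)

theorem FixesFrom.reflBound_lt (hw : FixesFrom n w) (hi : i < n) : reflBound w i < n :=
  (min_le_left _ _).trans_lt (hw.runMax_lt hi)

theorem bruhatLE_swap_iff_le_reflBound (hw : FixesFrom n w) (hij : i < j) :
    BruhatLE (swap i j) w ↔ j ≤ reflBound w i := by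
  rw [bruhatLE_swap_iff_rankFn hw hij, ← rankFn_inv w (i + 1), rankFn_le_iff_le_runMax,
    rankFn_le_iff_le_runMax, reflBound, le_min_iff]

theorem swap_injOn_lt : Set.InjOn (fun p : (_ : ℕ) × ℕ => swap p.1 p.2) {p | p.1 < p.2} := by
  rintro ⟨a, b⟩ (hab : a < b) ⟨c, d⟩ (hcd : c < d) (h : swap a b = swap c d)
  have ha := congrArg (· a) h
  have hb := congrArg (· b) h
  simp only [swap_apply_left, swap_apply_right, swap_apply_def] at ha hb
  grind

/-- The pairs `(i, j)` with `i < j` and `swap i j ≤ w`, for `w` fixing every `k ≥ n`. -/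
def reflPairs (n : ℕ) (w : Perm ℕ) : Finset ((_ : ℕ) × ℕ) :=
  (range n).sigma fun i => Ioc i (reflBound w i)

theorem setOf_isSwap_bruhatLE_eq_image (hw : FixesFrom n w) :
    {t : Perm ℕ | t.IsSwap ∧ BruhatLE t w} =
      (fun p : (_ : ℕ) × ℕ => swap p.1 p.2) '' (reflPairs n w : Set ((_ : ℕ) × ℕ)) := by
  have hmem : ∀ i j, i < j → BruhatLE (swap i j) w → ⟨i, j⟩ ∈ reflPairs n w := by
    intro i j hij h
    have hj := (bruhatLE_swap_iff_le_reflBound hw hij).1 h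
    have hi : i < n := by
      by_contra! hn
      have := (hw.mono (hn.trans i.le_succ)).reflBound_lt i.lt_succ_self
      omega
    exact mem_sigma.2 ⟨mem_range.2 hi, mem_Ioc.2 ⟨hij, hj⟩⟩
  ext t
  constructor
  · rintro ⟨⟨i, j, hij, rfl⟩, h⟩
    rcases hij.lt_or_gt with hij | hji
    · exact ⟨_, hmem i j hij h, rfl⟩
    · exact ⟨_, hmem j i hji (swap_comm i j ▸ h), swap_comm j i⟩
  · rintro ⟨⟨i, j⟩, h, rfl⟩
    obtain ⟨hij, hj⟩ := mem_Ioc.1 (mem_sigma.1 h).2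
    exact ⟨⟨i, j, hij.ne, rfl⟩, (bruhatLE_swap_iff_le_reflBound hw hij).2 hj⟩

theorem ncard_isSwap_bruhatLE (hw : FixesFrom n w) :
    {t : Perm ℕ | t.IsSwap ∧ BruhatLE t w}.ncard = ∑ i ∈ range n, (reflBound w i - i) := by
  have hlt : (reflPairs n w : Set ((_ : ℕ) × ℕ)) ⊆ {p | p.1 < p.2} :=
    fun p hp => (mem_Ioc.1 (mem_sigma.1 hp).2).1
  rw [setOf_isSwap_bruhatLE_eq_image hw, (swap_injOn_lt.mono hlt).ncard_image,
    Set.ncard_coe_finset, reflPairs, card_sigma]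
  exact sum_congr rfl fun _ _ => Nat.card_Ioc _ _

end ReflBound

section Defect

variable {n : ℕ} {w : Perm ℕ}

/-- The number of reflections below `w` minus the length of `w`, which is the dimension of the
tangent space of the Schubert variety `X_w` at the identity minus the dimension of `X_w`. -/
noncomputable def defect (w : Perm ℕ) : ℤ :=
  {t : Perm ℕ | t.IsSwap ∧ BruhatLE t w}.ncard - invNum w

theorem defect_eq_sum (hw : FixesFrom n w) :
    defect w = ∑ i ∈ range n, ((reflBound w i : ℤ) - i) - invNum w := by
  rw [defect, ncard_isSwap_bruhatLE hw, Nat.cast_sum]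
  exact congrArg (· - _) (sum_congr rfl fun i _ => Nat.cast_sub (self_le_reflBound w i))

theorem defect_inv (hw : FixesFrom n w) : defect w⁻¹ = defect w := by
  simp only [defect_eq_sum hw, defect_eq_sum hw.inv, reflBound_inv, invNum_inv]

theorem defect_one : defect 1 = 0 := by
  have h : FixesFrom 0 (1 : Perm ℕ) := fun _ _ => rfl
  simp [defect_eq_sum h, invNum_one]

end Defect

section ShiftCycle

variable {d n i p : ℕ}

/-- The cycle `d ↦ d + 1 ↦ ⋯ ↦ n ↦ d`, which is the identity if `n < d`. If `w d = n`, the one-line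
notation of `w * shiftCycle d n` is that of `w` with the entry `n` moved from position `d` to
position `n`. -/
def shiftCycle (d n : ℕ) : Perm ℕ where
  toFun i := if i < d ∨ n < i then i else if i = n then d else i + 1
  invFun i := if i < d ∨ n < i then i else if i = d then n else i - 1
  left_inv i := by grind
  right_inv i := by grind

theorem shiftCycle_apply (d n i : ℕ) :
    shiftCycle d n i = if i < d ∨ n < i then i else if i = n then d else i + 1 := rfl

theorem shiftCycle_apply_of_lt (hi : i < d) : shiftCycle d n i = i := if_pos (.inl hi)

theorem shiftCycle_apply_of_gt (hi : n < i) : shiftCycle d n i = i := if_pos (.inr hi)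

theorem shiftCycle_apply_of_mem_Ico (hdi : d ≤ i) (hin : i < n) : shiftCycle d n i = i + 1 := by
  rw [shiftCycle_apply, if_neg (by omega), if_neg hin.ne]

theorem shiftCycle_apply_last (hdn : d ≤ n) : shiftCycle d n n = d := by
  rw [shiftCycle_apply, if_neg (by omega), if_pos rfl]

theorem strictMonoOn_shiftCycle (d n : ℕ) : StrictMonoOn (shiftCycle d n) (Set.Iio n) := by
  intro i hi j hj hij
  simp only [Set.mem_Iio] at hi hj
  simp only [shiftCycle_apply]
  grind

theorem exists_lt_shiftCycle_eq (hdn : d ≤ n) (hp : p ≤ n) (hpd : p ≠ d) :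
    ∃ i < n, shiftCycle d n i = p := by
  rcases hpd.lt_or_gt with h | h
  · exact ⟨p, by omega, shiftCycle_apply_of_lt h⟩
  · exact ⟨p - 1, by omega, by rw [shiftCycle_apply_of_mem_Ico] <;> omega⟩

theorem shiftCycle_inv_apply (hpn : p ≤ n) (hpd : p ≠ d) :
    (shiftCycle d n)⁻¹ p = if d < p then p - 1 else p := by
  change (if p < d ∨ n < p then p else if p = d then n else p - 1) = _
  grind

end ShiftCycle

section Deletion

variable {d n i : ℕ} {w : Perm ℕ}

theorem FixesFrom.le_of_apply_eq (hw : FixesFrom (n + 1) w) (hd : w d = n) : d ≤ n := by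
  by_contra! h
  exact h.ne' ((hw d h).symm.trans hd)

theorem FixesFrom.mul_shiftCycle (hw : FixesFrom (n + 1) w) (hd : w d = n) :
    FixesFrom n (w * shiftCycle d n) := by
  intro k hk
  rw [Perm.mul_apply]
  rcases hk.eq_or_lt with rfl | hk
  · rw [shiftCycle_apply_last (hw.le_of_apply_eq hd), hd]
  · rw [shiftCycle_apply_of_gt hk, hw k hk]

theorem FixesFrom.apply_lt_of_ne (hw : FixesFrom (n + 1) w) (hd : w d = n) (hi : i ≤ n)
    (hid : i ≠ d) : w i < n :=
  (Nat.le_of_lt_succ (hw.apply_lt (Nat.lt_succ_of_le hi))).lt_of_ne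
    fun h => hid (w.injective (h.trans hd.symm))

theorem inversions_eq_image_union (hw : FixesFrom (n + 1) w) (hd : w d = n) :
    inversions w = Prod.map (shiftCycle d n) (shiftCycle d n) '' inversions (w * shiftCycle d n) ∪
      Prod.mk d '' Set.Ioc d n := by
  have hdn := hw.le_of_apply_eq hd
  have hw' := hw.mul_shiftCycle hd
  have hmono := strictMonoOn_shiftCycle d n
  ext ⟨a, b⟩
  constructor
  · intro h
    have hb := hw.lt_of_mem_inversions h
    obtain ⟨hab, hlt⟩ := mem_inversions.1 h
    by_cases had : a = d
    · exact .inr ⟨b, by grind, by rw [had]⟩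
    · have hbd : b ≠ d := by
        rintro rfl
        have := hw.apply_lt_of_ne hd (by omega) had
        omega
      obtain ⟨i, hi, rfl⟩ := exists_lt_shiftCycle_eq hdn (by omega) had
      obtain ⟨j, hj, rfl⟩ := exists_lt_shiftCycle_eq hdn (by omega) hbd
      exact .inl ⟨(i, j), ⟨(hmono.lt_iff_lt hi hj).1 hab, hlt⟩, rfl⟩
  · rintro (⟨⟨i, j⟩, h, h'⟩ | ⟨j, ⟨hdj, hjn⟩, h'⟩) <;> obtain ⟨rfl, rfl⟩ := Prod.mk.inj h'
    · have hj := hw'.lt_of_mem_inversions h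
      exact ⟨hmono (h.1.trans hj) hj h.1, h.2⟩
    · exact ⟨hdj, hd ▸ hw.apply_lt_of_ne hd hjn hdj.ne'⟩

theorem invNum_eq_invNum_mul_shiftCycle_add (hw : FixesFrom (n + 1) w) (hd : w d = n) :
    invNum w = invNum (w * shiftCycle d n) + (n - d) := by
  have hw' := hw.mul_shiftCycle hd
  have hdisj : Disjoint (Prod.map (shiftCycle d n) (shiftCycle d n) ''
      inversions (w * shiftCycle d n)) (Prod.mk d '' Set.Ioc d n) := by
    rw [Set.disjoint_left]
    rintro _ ⟨⟨i, j⟩, h, rfl⟩ ⟨k, -, hk⟩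
    have hi : shiftCycle d n i = shiftCycle d n n :=
      (Prod.mk.inj hk).1.symm.trans (shiftCycle_apply_last (hw.le_of_apply_eq hd)).symm
    have hin : i < n := h.1.trans (hw'.lt_of_mem_inversions h)
    exact hin.ne ((shiftCycle d n).injective hi)
  have hinj := (shiftCycle d n).injective.prodMap (shiftCycle d n).injective
  rw [← ncard_inversions, inversions_eq_image_union hw hd,
    Set.ncard_union_eq hdisj (hw'.finite_inversions.image _) ((Set.finite_Ioc d n).image _),
    Set.ncard_image_of_injective _ hinj, Set.ncard_image_of_injective _ (Prod.mk_right_injective d),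
    ncard_inversions, ← Finset.coe_Ioc, Set.ncard_coe_finset, Nat.card_Ioc]

theorem runMax_eq_of_le (hw : FixesFrom (n + 1) w) (hd : w d = n) (hdi : d ≤ i) (hi : i ≤ n) :
    runMax w i = n :=
  (Nat.le_of_lt_succ (hw.runMax_lt (Nat.lt_succ_of_le hi))).antisymm (hd ▸ le_runMax w hdi)

theorem runMax_mul_shiftCycle_of_lt (w : Perm ℕ) (hid : i < d) :
    runMax (w * shiftCycle d n) i = runMax w i :=
  sup_congr rfl fun a ha => by
    rw [Perm.mul_apply, shiftCycle_apply_of_lt ((Nat.le_of_lt_succ (mem_range.1 ha)).trans_lt hid)]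

theorem runMax_mul_shiftCycle_of_le (w : Perm ℕ) (hdi : d ≤ i) (hin : i < n) :
    runMax (w * shiftCycle d n) i = ((range (i + 2)).erase d).sup w := by
  have himage : (range (i + 1)).image (shiftCycle d n) = (range (i + 2)).erase d := by
    ext p
    simp only [mem_image, mem_range, mem_erase]
    constructor
    · rintro ⟨a, ha, rfl⟩
      rw [shiftCycle_apply]
      grind
    · rintro ⟨hpd, hp⟩
      obtain ⟨a, ha, rfl⟩ := exists_lt_shiftCycle_eq (hdi.trans hin.le) (p := p) (by omega) hpd
      refine ⟨a, ?_, rfl⟩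
      rw [shiftCycle_apply] at hp
      grind
  rw [← himage, sup_image, runMax, Perm.coe_mul]

theorem runMax_inv_ne (hd : w d = n) (hin : i < n) : runMax w⁻¹ i ≠ d := by
  intro h
  have := apply_runMax_inv_le w i
  rw [h, hd] at this
  omega

theorem lt_runMax_inv (hd : w d = n) (hdi : d ≤ i) (hin : i < n) : d < runMax w⁻¹ i :=
  (hdi.trans (self_le_runMax w⁻¹ i)).lt_of_ne (runMax_inv_ne hd hin).symm

theorem runMax_inv_mul_shiftCycle (hw : FixesFrom (n + 1) w) (hd : w d = n) (hin : i < n) :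
    runMax (w * shiftCycle d n)⁻¹ i =
      if d < runMax w⁻¹ i then runMax w⁻¹ i - 1 else runMax w⁻¹ i := by
  set g : ℕ → ℕ := fun p => if d < p then p - 1 else p
  have hg : Monotone g := fun a b hab => by grind
  have hpos : ∀ v ∈ range (i + 1), (w * shiftCycle d n)⁻¹ v = g (w⁻¹ v) := by
    intro v hv
    have hvn : v < n := (Nat.le_of_lt_succ (mem_range.1 hv)).trans_lt hin
    rw [mul_inv_rev, Perm.mul_apply, shiftCycle_inv_apply]
    · exact Nat.le_of_lt_succ (hw.inv.apply_lt (hvn.trans n.lt_succ_self))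
    · intro h
      exact hvn.ne ((Perm.inv_eq_iff_eq.1 h).trans hd)
  calc runMax (w * shiftCycle d n)⁻¹ i = (range (i + 1)).sup (g ∘ ⇑w⁻¹) := sup_congr rfl hpos
    _ = g (runMax w⁻¹ i) := (apply_sup_eq_sup_comp_of_linearOrder g hg (by simp [g])).symm

/-- The contribution of `i` to the change of `defect` when the entry `n = w d` is deleted from `w`:
the number of reflections `swap i j` lost, minus the inversion lost for each `i` in `[d, n)`. -/
def localDefect (w : Perm ℕ) (d n i : ℕ) : ℤ :=
  (reflBound w i : ℤ) - reflBound (w * shiftCycle d n) i - if d ≤ i then 1 else 0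

theorem localDefect_of_lt (hw : FixesFrom (n + 1) w) (hd : w d = n) (hid : i < d) :
    localDefect w d n i =
      if d < runMax w⁻¹ i ∧ runMax w⁻¹ i ≤ runMax w i then 1 else 0 := by
  have hin : i < n := hid.trans_le (hw.le_of_apply_eq hd)
  rw [localDefect, reflBound, reflBound, runMax_mul_shiftCycle_of_lt w hid,
    runMax_inv_mul_shiftCycle hw hd hin]
  grind

theorem localDefect_of_le (hw : FixesFrom (n + 1) w) (hd : w d = n) (hdi : d ≤ i) (hin : i < n) :
    localDefect w d n i =
      ((runMax w⁻¹ i - (runMax (w * shiftCycle d n) i + 1) : ℕ) : ℤ) := by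
  have hN := hw.inv.runMax_lt (hin.trans n.lt_succ_self)
  have hdN := lt_runMax_inv hd hdi hin
  rw [localDefect, reflBound, reflBound, runMax_eq_of_le hw hd hdi hin.le,
    runMax_inv_mul_shiftCycle hw hd hin]
  grind

theorem localDefect_nonneg (hw : FixesFrom (n + 1) w) (hd : w d = n) (hin : i < n) :
    0 ≤ localDefect w d n i := by
  rcases lt_or_ge i d with hid | hdi
  · rw [localDefect_of_lt hw hd hid]
    split_ifs <;> simp
  · rw [localDefect_of_le hw hd hdi hin]
    exact Int.natCast_nonneg _

theorem defect_eq_defect_mul_shiftCycle_add (hw : FixesFrom (n + 1) w) (hd : w d = n) :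
    defect w = defect (w * shiftCycle d n) + ∑ i ∈ range n, localDefect w d n i := by
  have hdn := hw.le_of_apply_eq hd
  have hlast : reflBound w n = n :=
    (Nat.le_of_lt_succ (hw.reflBound_lt n.lt_succ_self)).antisymm (self_le_reflBound w n)
  have hcount : ∑ i ∈ range n, (if d ≤ i then 1 else 0 : ℤ) = (n : ℤ) - d := by
    have : {i ∈ range n | d ≤ i} = Ico d n := by
      ext
      simp [and_comm]
    rw [sum_boole, this, Nat.card_Ico, Nat.cast_sub hdn]
  rw [defect_eq_sum hw, defect_eq_sum (hw.mul_shiftCycle hd), sum_range_succ, hlast,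
    invNum_eq_invNum_mul_shiftCycle_add hw hd]
  simp only [localDefect, sum_sub_distrib, hcount]
  push_cast [hdn]
  ring

theorem defect_nonneg (hw : FixesFrom n w) : 0 ≤ defect w := by
  induction n generalizing w with
  | zero => rw [hw.eq_one, defect_one]
  | succ n ih =>
    obtain ⟨d, hd⟩ := w.surjective n
    rw [defect_eq_defect_mul_shiftCycle_add hw hd]
    exact add_nonneg (ih (hw.mul_shiftCycle hd))
      (sum_nonneg fun i hi => localDefect_nonneg hw hd (mem_range.1 hi))

theorem defect_eq_zero_iff (hw : FixesFrom (n + 1) w) (hd : w d = n) :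
    defect w = 0 ↔
      defect (w * shiftCycle d n) = 0 ∧ ∀ i < n, localDefect w d n i = 0 := by
  have hlocal : ∀ i ∈ range n, 0 ≤ localDefect w d n i :=
    fun i hi => localDefect_nonneg hw hd (mem_range.1 hi)
  rw [defect_eq_defect_mul_shiftCycle_add hw hd,
    add_eq_zero_iff_of_nonneg (defect_nonneg (hw.mul_shiftCycle hd)) (sum_nonneg hlocal),
    sum_eq_zero_iff_of_nonneg hlocal]
  simp only [mem_range]

end Deletion

section Patterns

variable {a b c e : ℕ} {s w : Perm ℕ}

/-- The positions `a, b, c, e` form an occurrence of the pattern 3412 in `w`. -/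
def Occurs3412 (w : Perm ℕ) (a b c e : ℕ) : Prop :=
  a < b ∧ b < c ∧ c < e ∧ w c < w e ∧ w e < w a ∧ w a < w b

/-- The positions `a, b, c, e` form an occurrence of the pattern 4231 in `w`. -/
def Occurs4231 (w : Perm ℕ) (a b c e : ℕ) : Prop :=
  a < b ∧ b < c ∧ c < e ∧ w e < w b ∧ w b < w c ∧ w c < w a

theorem avoids3412_iff : Avoids3412 w ↔ ∀ a b c e, ¬ Occurs3412 w a b c e := by
  simp only [Avoids3412, Occurs3412, not_exists]

theorem avoids4231_iff : Avoids4231 w ↔ ∀ a b c e, ¬ Occurs4231 w a b c e := by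
  simp only [Avoids4231, Occurs4231, not_exists]

theorem avoids3412_one : Avoids3412 1 := avoids3412_iff.2 fun a b c e => by
  simp only [Occurs3412, Perm.one_apply]
  omega

theorem avoids4231_one : Avoids4231 1 := avoids4231_iff.2 fun a b c e => by
  simp only [Occurs4231, Perm.one_apply]
  omega

theorem Occurs3412.inv (h : Occurs3412 w a b c e) :
    Occurs3412 w⁻¹ (w c) (w e) (w a) (w b) := by
  simpa [Occurs3412, and_assoc, and_comm, and_left_comm] using h

theorem Occurs4231.inv (h : Occurs4231 w a b c e) :
    Occurs4231 w⁻¹ (w e) (w b) (w c) (w a) := by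
  simpa [Occurs4231, and_assoc, and_comm, and_left_comm] using h

theorem occurs3412_mul_iff {S : Set ℕ} (hs : StrictMonoOn s S) (ha : a ∈ S) (hb : b ∈ S)
    (hc : c ∈ S) (he : e ∈ S) :
    Occurs3412 (w * s) a b c e ↔ Occurs3412 w (s a) (s b) (s c) (s e) := by
  simp only [Occurs3412, Perm.mul_apply, hs.lt_iff_lt ha hb, hs.lt_iff_lt hb hc,
    hs.lt_iff_lt hc he]

theorem occurs4231_mul_iff {S : Set ℕ} (hs : StrictMonoOn s S) (ha : a ∈ S) (hb : b ∈ S)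
    (hc : c ∈ S) (he : e ∈ S) :
    Occurs4231 (w * s) a b c e ↔ Occurs4231 w (s a) (s b) (s c) (s e) := by
  simp only [Occurs4231, Perm.mul_apply, hs.lt_iff_lt ha hb, hs.lt_iff_lt hb hc,
    hs.lt_iff_lt hc he]

theorem Occurs3412.exists_lt_min (h : Occurs3412 w a b c e) :
    ∃ k < min b (w e), w e < w k := by
  obtain ⟨hab, hbc, hce, hwce, hwea, -⟩ := h
  rcases lt_or_ge a (w e) with ha | ha
  · exact ⟨a, lt_min hab ha, hwea⟩
  obtain ⟨k, hk, hkc⟩ := exists_mem_apply_notMem_of_card_lt (s := range (w e))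
    (t := (range (w e)).erase (w c)) w.injective (card_erase_lt_of_mem (mem_range.2 hwce))
  have hkw : k < w e := mem_range.1 hk
  have hne : w k ≠ w c := w.injective.ne (by omega)
  have hne' : w k ≠ w e := w.injective.ne (by omega)
  simp only [mem_erase, mem_range, not_and, not_lt] at hkc
  exact ⟨k, lt_min (by omega) hkw, (hkc hne).lt_of_ne hne'.symm⟩

end Patterns

section AvoidanceUnderDeletion

variable {a b c d e i n : ℕ} {w : Perm ℕ}

theorem FixesFrom.lt_of_occurs3412 (hw : FixesFrom n w) (h : Occurs3412 w a b c e) : e < n :=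
  hw.lt_of_mem_inversions (a := a) ⟨by grind [Occurs3412], by grind [Occurs3412]⟩

theorem FixesFrom.lt_of_occurs4231 (hw : FixesFrom n w) (h : Occurs4231 w a b c e) : e < n :=
  hw.lt_of_mem_inversions (a := a) ⟨by grind [Occurs4231], by grind [Occurs4231]⟩

theorem Avoids3412.mul_shiftCycle (hw : FixesFrom (n + 1) w) (hd : w d = n)
    (h : Avoids3412 w) : Avoids3412 (w * shiftCycle d n) := by
  refine avoids3412_iff.2 fun a b c e hocc => ?_
  have he := (hw.mul_shiftCycle hd).lt_of_occurs3412 hocc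
  obtain ⟨hab, hbc, hce, -⟩ := id hocc
  exact avoids3412_iff.1 h _ _ _ _ ((occurs3412_mul_iff (strictMonoOn_shiftCycle d n)
    (hab.trans (hbc.trans (hce.trans he))) (hbc.trans (hce.trans he)) (hce.trans he) he).1 hocc)

theorem Avoids4231.mul_shiftCycle (hw : FixesFrom (n + 1) w) (hd : w d = n)
    (h : Avoids4231 w) : Avoids4231 (w * shiftCycle d n) := by
  refine avoids4231_iff.2 fun a b c e hocc => ?_
  have he := (hw.mul_shiftCycle hd).lt_of_occurs4231 hocc
  obtain ⟨hab, hbc, hce, -⟩ := id hocc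
  exact avoids4231_iff.1 h _ _ _ _ ((occurs4231_mul_iff (strictMonoOn_shiftCycle d n)
    (hab.trans (hbc.trans (hce.trans he))) (hbc.trans (hce.trans he)) (hce.trans he) he).1 hocc)

theorem Occurs3412.snd_eq (hw : FixesFrom (n + 1) w) (hd : w d = n)
    (hav : Avoids3412 (w * shiftCycle d n)) (h : Occurs3412 w a b c e) : b = d := by
  by_contra hbd
  have hdn := hw.le_of_apply_eq hd
  have hen := hw.lt_of_occurs3412 h
  obtain ⟨hab, hbc, hce, hwce, hwea, hwab⟩ := id h
  have hwb := hw.apply_lt_of_ne hd (by omega) hbd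
  obtain ⟨a, ha, rfl⟩ := exists_lt_shiftCycle_eq hdn (p := a) (by omega) (by rintro rfl; omega)
  obtain ⟨b, hb, rfl⟩ := exists_lt_shiftCycle_eq hdn (p := b) (by omega) hbd
  obtain ⟨c, hc, rfl⟩ := exists_lt_shiftCycle_eq hdn (p := c) (by omega) (by rintro rfl; omega)
  obtain ⟨e, he, rfl⟩ := exists_lt_shiftCycle_eq hdn (p := e) (by omega) (by rintro rfl; omega)
  exact avoids3412_iff.1 hav a b c e
    ((occurs3412_mul_iff (strictMonoOn_shiftCycle d n) ha hb hc he).2 h)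

theorem Occurs4231.fst_eq (hw : FixesFrom (n + 1) w) (hd : w d = n)
    (hav : Avoids4231 (w * shiftCycle d n)) (h : Occurs4231 w a b c e) : a = d := by
  by_contra had
  have hdn := hw.le_of_apply_eq hd
  have hen := hw.lt_of_occurs4231 h
  obtain ⟨hab, hbc, hce, hweb, hwbc, hwca⟩ := id h
  have hwa := hw.apply_lt_of_ne hd (by omega) had
  obtain ⟨a, ha, rfl⟩ := exists_lt_shiftCycle_eq hdn (p := a) (by omega) had
  obtain ⟨b, hb, rfl⟩ := exists_lt_shiftCycle_eq hdn (p := b) (by omega) (by rintro rfl; omega)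
  obtain ⟨c, hc, rfl⟩ := exists_lt_shiftCycle_eq hdn (p := c) (by omega) (by rintro rfl; omega)
  obtain ⟨e, he, rfl⟩ := exists_lt_shiftCycle_eq hdn (p := e) (by omega) (by rintro rfl; omega)
  exact avoids4231_iff.1 hav a b c e
    ((occurs4231_mul_iff (strictMonoOn_shiftCycle d n) ha hb hc he).2 h)

theorem lt_apply_of_runMax_inv_lt {q : ℕ} (h : runMax w⁻¹ i < q) : i < w q := by
  by_contra! hq
  exact (le_runMax_inv hq).not_gt h

theorem exists_le_ne_le_apply {m p : ℕ} (w : Perm ℕ) (d : ℕ) (h : m < p) :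
    ∃ x ≤ p, x ≠ d ∧ m ≤ w x := by
  have hcard : #(range m) < #((range (p + 1)).erase d) := by
    have := pred_card_le_card_erase (s := range (p + 1)) (a := d)
    rw [card_range] at this ⊢
    omega
  obtain ⟨x, hx, hxm⟩ := exists_mem_apply_notMem_of_card_lt w.injective hcard
  simp only [mem_erase, mem_range, not_lt] at hx hxm
  exact ⟨x, Nat.le_of_lt_succ hx.2, hx.1, hxm⟩

theorem exists_gt_apply_lt {p : ℕ} (hap : a ≤ p) (hdp : d ≤ p) (hpa : p ≤ w a)
    (had : w a < w d) : ∃ q, p < q ∧ w q < w a := by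
  have hne : d ≠ a := by
    rintro rfl
    exact had.false
  have hcard : #(((range (p + 1)).erase d).erase a) < #(range (w a)) := by
    rw [card_erase_of_mem (mem_erase.2 ⟨hne.symm, mem_range.2 (by omega)⟩),
      card_erase_of_mem (mem_range.2 (by omega)), card_range, card_range]
    omega
  obtain ⟨v, hv, hq⟩ := exists_mem_apply_notMem_of_card_lt w⁻¹.injective hcard
  obtain ⟨q, rfl⟩ := w.surjective v
  rw [mem_range] at hv
  have hqa : q ≠ a := by
    rintro rfl
    exact hv.false
  have hqd : q ≠ d := by
    rintro rfl
    exact hv.asymm had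
  exact ⟨q, by simpa [hqa, hqd] using hq, hv⟩

theorem localDefect_eq_zero_of_avoids_of_lt (hw : FixesFrom (n + 1) w) (hd : w d = n)
    (h3412 : Avoids3412 w) (hid : i < d) : localDefect w d n i = 0 := by
  rw [localDefect_of_lt hw hd hid, if_neg]
  rintro ⟨hdp, hpM⟩
  set p := runMax w⁻¹ i
  obtain ⟨a, hai, ha⟩ := exists_apply_eq_runMax w i
  have hdn := hw.le_of_apply_eq hd
  have hwad : w a < w d := hd ▸ hw.apply_lt_of_ne hd (by omega) (by omega)
  obtain ⟨q, hpq, hqa⟩ := exists_gt_apply_lt (by omega) hdp.le (ha ▸ hpM) hwad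
  exact avoids3412_iff.1 h3412 a d p q ⟨by omega, hdp, hpq,
    (apply_runMax_inv_le w i).trans_lt (lt_apply_of_runMax_inv_lt hpq), hqa, hwad⟩

theorem localDefect_eq_zero_of_avoids_of_le (hw : FixesFrom (n + 1) w) (hd : w d = n)
    (h3412 : Avoids3412 w) (h4231 : Avoids4231 w) (hdi : d ≤ i) (hin : i < n) :
    localDefect w d n i = 0 := by
  rw [localDefect_of_le hw hd hdi hin, Nat.cast_eq_zero, Nat.sub_eq_zero_iff_le]
  by_contra! hMp
  set p := runMax w⁻¹ i
  set M := runMax (w * shiftCycle d n) i with hM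
  have hwp : w p ≤ i := apply_runMax_inv_le w i
  have hpn : p ≤ n := Nat.le_of_lt_succ (hw.inv.runMax_lt (hin.trans n.lt_succ_self))
  have hiM : i ≤ M := self_le_runMax _ i
  have hle_M : ∀ x ≤ i + 1, x ≠ d → w x ≤ M := fun x hx hxd => by
    rw [hM, runMax_mul_shiftCycle_of_le w hdi hin]
    exact le_sup (mem_erase.2 ⟨hxd, mem_range.2 (by omega)⟩)
  obtain ⟨y, hyp, hyd, hMy⟩ := exists_le_ne_le_apply w d hMp
  have hiy : i + 1 < y := by
    by_contra! h
    exact (hle_M y h hyd).not_gt hMy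
  have hyp : y < p := hyp.lt_of_ne (by rintro rfl; omega)
  have hwyd : w y < w d := hd ▸ hw.apply_lt_of_ne hd (by omega) hyd
  have hbetween : ∀ z, d < z → z ≤ i + 1 → w z < w p := fun z hdz hzi => by
    refine lt_of_le_of_ne ?_ (w.injective.ne (by omega))
    by_contra! hpz
    exact avoids4231_iff.1 h4231 d z y p
      ⟨hdz, by omega, hyp, hpz, (hle_M z hzi hdz.ne').trans_lt hMy, hwyd⟩
  obtain ⟨x, hxi, hxd, hpx⟩ := exists_le_ne_le_apply w d (Nat.lt_succ_of_le hwp)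
  have hx : x < d := hxd.lt_or_gt.resolve_right fun h => (hbetween x h hxi).not_ge hpx
  exact avoids3412_iff.1 h3412 x d (d + 1) p
    ⟨hx, d.lt_succ_self, by omega, hbetween _ d.lt_succ_self (by omega),
      hpx.lt_of_ne (w.injective.ne (by omega)), ((hle_M x hxi hxd).trans_lt hMy).trans hwyd⟩

theorem not_occurs3412_of_localDefect_eq_zero (hw : FixesFrom (n + 1) w) (hd : w d = n)
    (hloc : ∀ i < n, localDefect w d n i = 0)
    (hloc' : ∀ i < n, localDefect w⁻¹ (w n) n i = 0) : ¬ Occurs3412 w a d c n := by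
  intro h
  have hd' : w⁻¹ n = d := Perm.inv_eq_iff_eq.2 hd.symm
  have hinv := h.inv
  rw [hd] at hinv
  obtain ⟨k, hk, hwk⟩ := h.exists_lt_min
  obtain ⟨v, hv, hwv⟩ := hinv.exists_lt_min
  rw [hd', lt_min_iff] at hv
  rw [hd'] at hwv
  rw [lt_min_iff] at hk
  set i := max k v
  have hid : i < d := max_lt hk.1 hv.2
  have hie : i < w n := max_lt hk.2 hv.1
  have hin : i < n := hid.trans_le (hw.le_of_apply_eq hd)
  have hdN : d < runMax w⁻¹ i := hwv.trans_le (le_runMax _ (le_max_right k v))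
  have heM : w n < runMax w i := hwk.trans_le (le_runMax _ (le_max_left k v))
  have hMN := hloc i hin
  have hNM := hloc' i hin
  rw [localDefect_of_lt hw hd hid] at hMN
  rw [localDefect_of_lt hw.inv (w.symm_apply_apply n) hie, inv_inv] at hNM
  simp only [hdN, heM, true_and, ite_eq_right_iff, one_ne_zero, imp_false] at hMN hNM
  exact (le_total _ _).elim hMN hNM

theorem not_occurs4231_of_localDefect_eq_zero (hw : FixesFrom (n + 1) w) (hd : w d = n)
    (hnd : w n ≤ d) (hav : Avoids4231 (w * shiftCycle d n))
    (hloc : ∀ i < n, localDefect w d n i = 0) : ¬ Occurs4231 w d b c n := by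
  rintro ⟨hdb, hbc, hcn, hwnb, hwbc, hwcd⟩
  have hdn : d < n := hdb.trans (hbc.trans hcn)
  have hnN : n ≤ runMax w⁻¹ d := le_runMax_inv hnd
  have hNM := hloc d hdn
  rw [localDefect_of_le hw hd le_rfl hdn, runMax_mul_shiftCycle_of_le w le_rfl hdn,
    Nat.cast_eq_zero, Nat.sub_eq_zero_iff_le] at hNM
  obtain ⟨g, hg, hgM⟩ := exists_mem_eq_sup ((range (d + 2)).erase d)
    ⟨d + 1, by simp⟩ w
  rw [hgM] at hNM
  simp only [mem_erase, mem_range] at hg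
  have hgb : g ≠ b := by rintro rfl; omega
  have hwcg : w c ≠ w g := w.injective.ne (by omega)
  exact hg.1 (Occurs4231.fst_eq hw hd hav
    ⟨by omega, hbc, hcn, hwnb, hwbc, show w c < w g by omega⟩)

theorem avoids3412_of_deletions (hw : FixesFrom (n + 1) w) (hd : w d = n)
    (hav : Avoids3412 (w * shiftCycle d n)) (hav' : Avoids3412 (w⁻¹ * shiftCycle (w n) n))
    (hloc : ∀ i < n, localDefect w d n i = 0)
    (hloc' : ∀ i < n, localDefect w⁻¹ (w n) n i = 0) : Avoids3412 w := by
  refine avoids3412_iff.2 fun a b c e h => ?_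
  obtain rfl : b = d := h.snd_eq hw hd hav
  obtain rfl : e = n := w.injective (h.inv.snd_eq hw.inv (w.symm_apply_apply n) hav')
  exact not_occurs3412_of_localDefect_eq_zero hw hd hloc hloc' h

theorem avoids4231_of_deletions (hw : FixesFrom (n + 1) w) (hd : w d = n)
    (hav : Avoids4231 (w * shiftCycle d n)) (hav' : Avoids4231 (w⁻¹ * shiftCycle (w n) n))
    (hloc : ∀ i < n, localDefect w d n i = 0)
    (hloc' : ∀ i < n, localDefect w⁻¹ (w n) n i = 0) : Avoids4231 w := by
  have hinv : w⁻¹ (w n) = n := w.symm_apply_apply n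
  have hd' : w⁻¹ n = d := Perm.inv_eq_iff_eq.2 hd.symm
  refine avoids4231_iff.2 fun a b c e h => ?_
  obtain rfl : a = d := h.fst_eq hw hd hav
  obtain rfl : e = n := w.injective (h.inv.fst_eq hw.inv hinv hav')
  rcases le_total (w e) a with hle | hle
  · exact not_occurs4231_of_localDefect_eq_zero hw hd hle hav hloc h
  · exact not_occurs4231_of_localDefect_eq_zero hw.inv hinv (hd'.trans_le hle) hav' hloc'
      (hd ▸ h.inv)

theorem avoids_iff_defect_eq_zero (hw : FixesFrom n w) :
    Avoids3412 w ∧ Avoids4231 w ↔ defect w = 0 := by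
  induction n generalizing w with
  | zero => simp [hw.eq_one, avoids3412_one, avoids4231_one, defect_one]
  | succ n ih =>
    obtain ⟨d, hd⟩ := w.surjective n
    have hd' : w⁻¹ (w n) = n := w.symm_apply_apply n
    constructor
    · rintro ⟨h3412, h4231⟩
      refine (defect_eq_zero_iff hw hd).2 ⟨(ih (hw.mul_shiftCycle hd)).1
        ⟨h3412.mul_shiftCycle hw hd, h4231.mul_shiftCycle hw hd⟩, fun i hin => ?_⟩
      rcases lt_or_ge i d with hid | hdi
      · exact localDefect_eq_zero_of_avoids_of_lt hw hd h3412 hid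
      · exact localDefect_eq_zero_of_avoids_of_le hw hd h3412 h4231 hdi hin
    · intro h
      obtain ⟨h0, hloc⟩ := (defect_eq_zero_iff hw hd).1 h
      obtain ⟨h0', hloc'⟩ := (defect_eq_zero_iff hw.inv hd').1 ((defect_inv hw).trans h)
      obtain ⟨h3412, h4231⟩ := (ih (hw.mul_shiftCycle hd)).2 h0
      obtain ⟨h3412', h4231'⟩ := (ih (hw.inv.mul_shiftCycle hd')).2 h0'
      exact ⟨avoids3412_of_deletions hw hd h3412 h3412' hloc hloc',
        avoids4231_of_deletions hw hd h4231 h4231' hloc hloc'⟩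

end AvoidanceUnderDeletion

/-- Carrell–Peterson criterion: w is smooth (avoids 3412 and 4231) iff
ℓ(w) equals the number of reflections below w in Bruhat order. -/
theorem stmt2 (n : ℕ) (w : Perm ℕ) (hw : ∀ k, n ≤ k → w k = k) :
    (Avoids3412 w ∧ Avoids4231 w) ↔
      invNum w = Set.ncard {t : Perm ℕ | t.IsSwap ∧ BruhatLE t w} := by
  rw [avoids_iff_defect_eq_zero hw, defect, sub_eq_zero, Nat.cast_inj, eq_comm]
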